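/- (Convergence of the time-discretized filter to the exact filter, the claim displayed in Section 2.2 of the paper.) Let (X, 𝒳) be a measurable space, x₀ ∈ X, n ≥ 1, let M_1,…,M_n be Markov kernels from X to X, and for each level l ∈ ℕ let M̂_1^l,…,M̂_n^l be Markov kernels from X to X; let g_1,…,g_n : X → ℝ be measurable with 0 < δ ≤ g_p(x) ≤ G < ∞ for all p and x. Suppose there exists C < ∞ such that for every l ∈ ℕ, every p ∈ {1,…,n}, every measurable φ : X → ℝ with sup_x |φ(x)| ≤ 1, and every x ∈ X, | ∫ φ(y) M_p(x, dy) − ∫ φ(y) M̂_p^l(x, dy) | ≤ C·2^{−l}. Then for every measurable φ : X → ℝ with sup_x |φ(x)| ≤ 1, the discretized filters converge to the exact filter: lim_{l → ∞} π_n^l(φ) = π_n(φ). -/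

import Mathlib

/-!
The discretized filter converges because the unnormalized functionals do. Peeling off the first
transition gives, for `Q = filterUnnorm M g` and `Q' = filterUnnorm M' g`, the telescoping identity
`Q k (m+1) φ - Q' k (m+1) φ = (M k - M' k)(g k * Q (k+1) m φ) + M' k (g k * (Q - Q') (k+1) m φ)`.
If the kernels differ by at most `ε` on measurable functions bounded by `1`, then, since
`|Q k m φ| ≤ G ^ m`, induction on `m` yields `|Q k m φ - Q' k m φ| ≤ m * G ^ m * ε`
(`abs_filterUnnorm_sub_le`). With `ε = C * 2 ^ (-l) → 0` both numerator and denominator converge,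
and the limiting denominator is at least `δ ^ n > 0` (`pow_le_filterUnnorm_one`).
-/

open MeasureTheory ProbabilityTheory Filter

/-- `filterUnnorm M g k m φ x` is the unnormalized smoothing functional
`∫ … ∫ g_k(x_{k+1}) ⋯ g_{k+m-1}(x_{k+m}) φ(x_{k+m})
  M_k(x, dx_{k+1}) ⋯ M_{k+m-1}(x_{k+m-1}, dx_{k+m})`,
the integral over `m` steps of the chain driven by the kernels `M_k, M_{k+1}, …`,
weighted by the potentials `g_k, g_{k+1}, …`, of the test function `φ`
evaluated at the final state, started from `x`. -/
noncomputable def filterUnnorm {X : Type*} [MeasurableSpace X]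
    (M : ℕ → Kernel X X) (g : ℕ → X → ℝ) :
    ℕ → ℕ → (X → ℝ) → X → ℝ
  | _, 0, φ, x => φ x
  | k, m + 1, φ, x => ∫ y, g k y * filterUnnorm M g (k + 1) m φ y ∂(M k x)

section FilterBounds

variable {X : Type*} [MeasurableSpace X]

lemma integrable_of_abs_le (μ : Measure X) [IsFiniteMeasure μ] {f : X → ℝ} {B : ℝ}
    (hf : Measurable f) (hB : ∀ x, |f x| ≤ B) : Integrable f μ :=
  Integrable.of_bound hf.aestronglyMeasurable B (ae_of_all _ hB)

lemma abs_integral_le_of_abs_le (μ : Measure X) [IsProbabilityMeasure μ] {f : X → ℝ} {B : ℝ}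
    (hB : ∀ x, |f x| ≤ B) : |∫ x, f x ∂μ| ≤ B := by
  simpa using norm_integral_le_of_norm_le_const (μ := μ) (f := f) (ae_of_all _ hB)

lemma abs_mul_le_of_mem_Icc {a b δ G B : ℝ} (hδ : 0 < δ) (ha : δ ≤ a ∧ a ≤ G) (hb : |b| ≤ B) :
    |a * b| ≤ G * B := by
  rw [abs_mul, abs_of_pos (hδ.trans_le ha.1)]
  exact mul_le_mul ha.2 hb (abs_nonneg b) (hδ.le.trans (ha.1.trans ha.2))

lemma measurable_filterUnnorm (M : ℕ → Kernel X X) (g : ℕ → X → ℝ)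
    (hgm : ∀ p, Measurable (g p)) {φ : X → ℝ} (hφ : Measurable φ) (k m : ℕ) :
    Measurable (filterUnnorm M g k m φ) := by
  induction m generalizing k with
  | zero => exact hφ
  | succ m ih =>
    exact (((hgm k).mul (ih (k + 1))).stronglyMeasurable.integral_kernel (κ := M k)).measurable

lemma abs_filterUnnorm_le (M : ℕ → Kernel X X) (hM : ∀ p, IsMarkovKernel (M p))
    (g : ℕ → X → ℝ) {δ G : ℝ} (hδ : 0 < δ) (hg : ∀ p x, δ ≤ g p x ∧ g p x ≤ G)
    {φ : X → ℝ} (hφ : ∀ x, |φ x| ≤ 1) (k m : ℕ) (x : X) :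
    |filterUnnorm M g k m φ x| ≤ G ^ m := by
  induction m generalizing k x with
  | zero => simpa [filterUnnorm] using hφ x
  | succ m ih =>
    rw [pow_succ', filterUnnorm]
    exact abs_integral_le_of_abs_le _ fun y ↦ abs_mul_le_of_mem_Icc hδ (hg k y) (ih (k + 1) y)

lemma pow_le_filterUnnorm_one (M : ℕ → Kernel X X) (hM : ∀ p, IsMarkovKernel (M p))
    (g : ℕ → X → ℝ) (hgm : ∀ p, Measurable (g p)) {δ G : ℝ} (hδ : 0 < δ)
    (hg : ∀ p x, δ ≤ g p x ∧ g p x ≤ G) (k m : ℕ) (x : X) :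
    δ ^ m ≤ filterUnnorm M g k m (fun _ ↦ 1) x := by
  induction m generalizing k x with
  | zero => simp [filterUnnorm]
  | succ m ih =>
    rw [pow_succ', filterUnnorm]
    have hint : Integrable (fun y ↦ g k y * filterUnnorm M g (k + 1) m (fun _ ↦ 1) y) (M k x) :=
      integrable_of_abs_le _
        ((hgm k).mul (measurable_filterUnnorm M g hgm measurable_const (k + 1) m))
        fun y ↦ abs_mul_le_of_mem_Icc hδ (hg k y)
          (abs_filterUnnorm_le M hM g hδ hg (by simp) (k + 1) m y)
    have h := integral_mono (integrable_const (δ * δ ^ m)) hint fun y ↦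
      mul_le_mul (hg k y).1 (ih (k + 1) y) (by positivity) (hδ.le.trans (hg k y).1)
    simpa using h

/-- By homogeneity, a perturbation bound on the unit ball of bounded measurable functions scales to
functions bounded by `B`. -/
lemma abs_integral_sub_le_mul {μ ν : Measure X} {ε : ℝ}
    (h : ∀ φ : X → ℝ, Measurable φ → (∀ x, |φ x| ≤ 1) → |∫ y, φ y ∂μ - ∫ y, φ y ∂ν| ≤ ε)
    {f : X → ℝ} (hf : Measurable f) {B : ℝ} (hB : 0 < B) (hfB : ∀ x, |f x| ≤ B) :
    |∫ y, f y ∂μ - ∫ y, f y ∂ν| ≤ B * ε := by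
  have := h (fun y ↦ f y / B) (hf.div_const B) fun x ↦ by
    rw [abs_div, abs_of_pos hB, div_le_one hB]
    exact hfB x
  rw [integral_div, integral_div, ← sub_div, abs_div, abs_of_pos hB, div_le_iff₀ hB] at this
  linarith

/-- Each of the `m` kernel replacements costs at most `G ^ m * ε`. -/
lemma abs_filterUnnorm_sub_le (M M' : ℕ → Kernel X X) (hM : ∀ p, IsMarkovKernel (M p))
    (hM' : ∀ p, IsMarkovKernel (M' p)) (g : ℕ → X → ℝ) (hgm : ∀ p, Measurable (g p))
    {δ G : ℝ} (hδ : 0 < δ) (hg : ∀ p x, δ ≤ g p x ∧ g p x ≤ G) {n : ℕ} {ε : ℝ}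
    (h : ∀ p < n, ∀ φ : X → ℝ, Measurable φ → (∀ x, |φ x| ≤ 1) →
      ∀ x, |∫ y, φ y ∂(M p x) - ∫ y, φ y ∂(M' p x)| ≤ ε)
    {φ : X → ℝ} (hφm : Measurable φ) (hφ : ∀ x, |φ x| ≤ 1) (k m : ℕ) (hkm : k + m ≤ n) (x : X) :
    |filterUnnorm M g k m φ x - filterUnnorm M' g k m φ x| ≤ m * G ^ m * ε := by
  induction m generalizing k x with
  | zero => simp [filterUnnorm]
  | succ m ih =>
    have hG : 0 < G := hδ.trans_le ((hg k x).1.trans (hg k x).2)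
    set q := filterUnnorm M g (k + 1) m φ with hq
    set q' := filterUnnorm M' g (k + 1) m φ with hq'
    have hmeas : Measurable fun y ↦ g k y * q y :=
      (hgm k).mul (measurable_filterUnnorm M g hgm hφm (k + 1) m)
    have hmeas' : Measurable fun y ↦ g k y * q' y :=
      (hgm k).mul (measurable_filterUnnorm M' g hgm hφm (k + 1) m)
    have hbd : ∀ y, |g k y * q y| ≤ G * G ^ m := fun y ↦
      abs_mul_le_of_mem_Icc hδ (hg k y) (abs_filterUnnorm_le M hM g hδ hg hφ (k + 1) m y)
    have hbd' : ∀ y, |g k y * q' y| ≤ G * G ^ m := fun y ↦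
      abs_mul_le_of_mem_Icc hδ (hg k y) (abs_filterUnnorm_le M' hM' g hδ hg hφ (k + 1) m y)
    have hfirst : |∫ y, g k y * q y ∂(M k x) - ∫ y, g k y * q y ∂(M' k x)| ≤ G * G ^ m * ε :=
      abs_integral_sub_le_mul (fun ψ hψm hψ ↦ h k (by omega) ψ hψm hψ x) hmeas (by positivity) hbd
    have hrest : |∫ y, g k y * q y ∂(M' k x) - ∫ y, g k y * q' y ∂(M' k x)|
        ≤ G * (m * G ^ m * ε) := by
      rw [← integral_sub (integrable_of_abs_le _ hmeas hbd) (integrable_of_abs_le _ hmeas' hbd')]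
      refine abs_integral_le_of_abs_le _ fun y ↦ ?_
      rw [← mul_sub]
      exact abs_mul_le_of_mem_Icc hδ (hg k y) (ih (k + 1) (by omega) y)
    calc |filterUnnorm M g k (m + 1) φ x - filterUnnorm M' g k (m + 1) φ x|
        = |∫ y, g k y * q y ∂(M k x) - ∫ y, g k y * q' y ∂(M' k x)| := rfl
      _ ≤ _ := abs_sub_le _ (∫ y, g k y * q y ∂(M' k x)) _
      _ ≤ G * G ^ m * ε + G * (m * G ^ m * ε) := add_le_add hfirst hrest
      _ = (m + 1 : ℕ) * G ^ (m + 1) * ε := by push_cast; ring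

end FilterBounds

/-- convergence of the time-discretized filter to the exact filter.
With `π_n(φ) = filterUnnorm M g 0 n φ x₀ / filterUnnorm M g 0 n 1 x₀` and the
level-`l` filter `π_n^l` defined analogously from the kernels `M̂^l`, if the
one-step kernel perturbation at level `l` is bounded by `C·2^{−l}` uniformly,
then `π_n^l(φ) → π_n(φ)` as `l → ∞` for every bounded measurable `φ`. -/
theorem discretized_filter_convergence
    {X : Type*} [MeasurableSpace X] (x₀ : X) (n : ℕ) (hn : 1 ≤ n)
    (M : ℕ → Kernel X X) (hM : ∀ p, IsMarkovKernel (M p))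
    (Mh : ℕ → ℕ → Kernel X X) (hMh : ∀ l p, IsMarkovKernel (Mh l p))
    (g : ℕ → X → ℝ) (hgm : ∀ p, Measurable (g p))
    (δ G : ℝ) (hδ : 0 < δ)
    (hg : ∀ p x, δ ≤ g p x ∧ g p x ≤ G)
    (C : ℝ)
    (hpert : ∀ l : ℕ, ∀ p < n, ∀ φ : X → ℝ, Measurable φ → (∀ x, |φ x| ≤ 1) →
      ∀ x, |(∫ y, φ y ∂(M p x)) - (∫ y, φ y ∂(Mh l p x))| ≤
        C * (2 : ℝ) ^ (-(l : ℤ))) :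
    ∀ φ : X → ℝ, Measurable φ → (∀ x, |φ x| ≤ 1) →
      Tendsto
        (fun l : ℕ =>
          filterUnnorm (Mh l) g 0 n φ x₀ /
            filterUnnorm (Mh l) g 0 n (fun _ => 1) x₀)
        atTop
        (nhds (filterUnnorm M g 0 n φ x₀ /
          filterUnnorm M g 0 n (fun _ => 1) x₀)) := by
  intro φ hφm hφ
  have hε : Tendsto (fun l : ℕ ↦ n * G ^ n * (C * (2 : ℝ) ^ (-(l : ℤ)))) atTop (nhds 0) := by
    have h2 : Tendsto (fun l : ℕ ↦ (2 : ℝ) ^ (-(l : ℤ))) atTop (nhds 0) := by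
      simpa using tendsto_pow_atTop_nhds_zero_of_lt_one (r := (2 : ℝ)⁻¹) (by norm_num) (by norm_num)
    simpa using (h2.const_mul C).const_mul (n * G ^ n)
  have key : ∀ ψ : X → ℝ, Measurable ψ → (∀ x, |ψ x| ≤ 1) →
      Tendsto (fun l ↦ filterUnnorm (Mh l) g 0 n ψ x₀) atTop (nhds (filterUnnorm M g 0 n ψ x₀)) := by
    intro ψ hψm hψ
    rw [tendsto_iff_dist_tendsto_zero]
    refine squeeze_zero (fun _ ↦ dist_nonneg) (fun l ↦ ?_) hε
    rw [dist_comm, Real.dist_eq]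
    exact abs_filterUnnorm_sub_le M (Mh l) hM (hMh l) g hgm hδ hg (hpert l) hψm hψ 0 n (by simp) x₀
  exact (key φ hφm hφ).div (key _ measurable_const (by simp))
    ((pow_pos hδ n).trans_le (pow_le_filterUnnorm_one M hM g hgm hδ hg 0 n x₀)).ne'
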